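/- Let A ⪰ 0 and B ≻ 0 be symmetric matrices, and let P be the orthogonal projection onto ker A. For all sufficiently small t > 0, A + tB is invertible and ‖(A + tB)^{-1} - (1/t)(P B P)†‖₂ ≤ (1/λ_min⁺(A)) · (1 + λ_max(B)/λ_min(B))², where λ_min⁺(A) is the smallest nonzero eigenvalue of A (if A ≠ 0) and (PBP)† is the Moore–Penrose pseudoinverse. -/

import Mathlib

open Matrix

/-- The ℓ₂ operator (spectral) norm of a real square matrix. -/
noncomputable def specNorm5 {n : ℕ} (M : Matrix (Fin n) (Fin n) ℝ) : ℝ :=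
  ‖Matrix.toEuclideanCLM (𝕜 := ℝ) M‖

/-!
Write `S = A + tB` and `K = 1 - MB`, where `M = (PBP)†`. Since `AM = MA = 0` and `MBM = M`, one has
`S⁻¹ - t⁻¹M = K S⁻¹ (1 - BM)`. Coercivity of `B` makes `PBP` invertible on the range of `P`, so
`MBP = P = PBM`; hence `K` and `1 - BM` annihilate `P`, and with `Q = 1 - P` the remainder equals
`K (Q S⁻¹ Q) (1 - BM)`. The middle factor only sees the spectral gap of `A` and has norm at most
`1/α`; the outer ones have norm at most `1 + ‖B‖/β` because `‖M‖ ≤ 1/β`.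
-/

section MoorePenrose

/-- `b` is the Moore–Penrose pseudoinverse of `a`: the four Penrose conditions hold. As a relation
it makes sense, and determines `b` uniquely, in any star semigroup; existence is not asserted. -/
structure IsMoorePenroseInverse {R : Type*} [Mul R] [Star R] (a b : R) : Prop where
  mul_mul_self : a * b * a = a
  self_mul_mul : b * a * b = b
  isSelfAdjoint_mul : IsSelfAdjoint (a * b)
  isSelfAdjoint_mul' : IsSelfAdjoint (b * a)

namespace IsMoorePenroseInverse

variable {R : Type*}

protected theorem map {S F : Type*} [Mul R] [Star R] [Mul S] [Star S] [FunLike F R S]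
    [MulHomClass F R S] [StarHomClass F R S] {a b : R} (h : IsMoorePenroseInverse a b) (f : F) :
    IsMoorePenroseInverse (f a) (f b) where
  mul_mul_self := by simp only [← map_mul, h.mul_mul_self]
  self_mul_mul := by simp only [← map_mul, h.self_mul_mul]
  isSelfAdjoint_mul := map_mul f a b ▸ h.isSelfAdjoint_mul.map f
  isSelfAdjoint_mul' := map_mul f b a ▸ h.isSelfAdjoint_mul'.map f

variable [Semigroup R] [StarMul R] {a b p x : R}

protected theorem star (h : IsMoorePenroseInverse a b) :
    IsMoorePenroseInverse (star a) (star b) where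
  mul_mul_self := by rw [mul_assoc, ← star_mul, ← star_mul, h.mul_mul_self]
  self_mul_mul := by rw [mul_assoc, ← star_mul, ← star_mul, h.self_mul_mul]
  isSelfAdjoint_mul := by rw [← star_mul, h.isSelfAdjoint_mul'.star_eq]; exact h.isSelfAdjoint_mul'
  isSelfAdjoint_mul' := by rw [← star_mul, h.isSelfAdjoint_mul.star_eq]; exact h.isSelfAdjoint_mul

theorem mul_eq_right_of_mul_eq_left (h : IsMoorePenroseInverse a b) (hp : IsSelfAdjoint p)
    (ha : a * p = a) : p * b = b := by
  have hpa : p * star a = star a := by rw [← hp.star_eq, ← star_mul, ha]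
  have hb : star a * star b * b = b := by
    rw [← star_mul, h.isSelfAdjoint_mul'.star_eq, h.self_mul_mul]
  calc p * b = p * star a * star b * b := by rw [mul_assoc, mul_assoc, ← mul_assoc (star a), hb]
    _ = b := by rw [hpa, hb]

theorem mul_eq_left_of_mul_eq_right (h : IsMoorePenroseInverse a b) (hp : IsSelfAdjoint p)
    (ha : p * a = a) : b * p = b := by
  have hpb : p * star b = star b :=
    h.star.mul_eq_right_of_mul_eq_left hp (by rw [← hp.star_eq, ← star_mul, ha])
  apply star_injective
  rw [star_mul, hp.star_eq, hpb]

theorem projection_mul (h : IsMoorePenroseInverse (p * x * p) b) (hp : IsStarProjection p) :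
    p * b = b :=
  h.mul_eq_right_of_mul_eq_left hp.isSelfAdjoint (by rw [mul_assoc, hp.isIdempotentElem.eq])

theorem mul_projection (h : IsMoorePenroseInverse (p * x * p) b) (hp : IsStarProjection p) :
    b * p = b :=
  h.mul_eq_left_of_mul_eq_right hp.isSelfAdjoint <| by
    simp only [← mul_assoc, hp.isIdempotentElem.eq]

theorem mul_mul_eq_self_of_compression (h : IsMoorePenroseInverse (p * x * p) b)
    (hp : IsStarProjection p) : b * x * b = b :=
  calc b * x * b = b * p * x * (p * b) := by rw [h.mul_projection hp, h.projection_mul hp]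
    _ = b * (p * x * p) * b := by simp only [mul_assoc]
    _ = b := h.self_mul_mul

end IsMoorePenroseInverse

end MoorePenrose

section Algebra

theorem map_ringInverse_of_isUnit {R S F : Type*} [MonoidWithZero R] [MonoidWithZero S]
    [FunLike F R S] [MonoidHomClass F R S] (f : F) {x : R} (hx : IsUnit x) :
    f (Ring.inverse x) = Ring.inverse (f x) := by
  obtain ⟨u, rfl⟩ := hx
  rw [Ring.inverse_unit]
  exact (Ring.inverse_unit (Units.map (f : R →* S) u)).symm

variable {𝕜 R : Type*} [Field 𝕜] [Ring R] [Algebra 𝕜 R] {t : 𝕜}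

theorem ringInverse_sub_inv_smul_eq_mul {s b m : R} (ht : t ≠ 0) (hs : IsUnit s)
    (hsm : s * m = t • (b * m)) (hms : m * s = t • (m * b)) (hm : m * b * m = m) :
    Ring.inverse s - t⁻¹ • m = (1 - m * b) * Ring.inverse s * (1 - b * m) := by
  have hinv_mul : Ring.inverse s * (b * m) = t⁻¹ • m := by
    rw [eq_inv_smul_iff₀ ht, ← mul_smul_comm, ← hsm, Ring.inverse_mul_cancel_left _ _ hs]
  have hmul_inv : m * b * Ring.inverse s = t⁻¹ • m := by
    rw [eq_inv_smul_iff₀ ht, ← smul_mul_assoc, ← hms, Ring.mul_inverse_cancel_right _ _ hs]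
  rw [sub_mul, one_mul, hmul_inv, mul_sub, mul_one, sub_mul, hinv_mul, smul_mul_assoc, ← mul_assoc,
    hm, sub_self, sub_zero]

theorem ringInverse_add_smul_sub_inv_smul_eq_mul {a b m p : R} (ht : t ≠ 0)
    (hs : IsUnit (a + t • b)) (ham : a * m = 0) (hma : m * a = 0) (hm : m * b * m = m)
    (hmbp : m * b * p = p) (hpbm : p * b * m = p) :
    Ring.inverse (a + t • b) - t⁻¹ • m =
      (1 - m * b) * ((1 - p) * Ring.inverse (a + t • b) * (1 - p)) * (1 - b * m) := by
  have hleft : (1 - m * b) * (1 - p) = 1 - m * b := by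
    rw [mul_sub, mul_one, sub_mul, one_mul, hmbp, sub_self, sub_zero]
  have hright : (1 - p) * (1 - b * m) = 1 - b * m := by
    rw [sub_mul, one_mul, mul_sub, mul_one, ← mul_assoc, hpbm, sub_self, sub_zero]
  calc Ring.inverse (a + t • b) - t⁻¹ • m
      = (1 - m * b) * Ring.inverse (a + t • b) * (1 - b * m) :=
        ringInverse_sub_inv_smul_eq_mul ht hs
          (by rw [add_mul, ham, zero_add, smul_mul_assoc])
          (by rw [mul_add, hma, zero_add, mul_smul_comm]) hm
    _ = (1 - m * b) * (1 - p) * Ring.inverse (a + t • b) * ((1 - p) * (1 - b * m)) := by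
        rw [hleft, hright]
    _ = _ := by simp only [mul_assoc]

end Algebra

section HilbertSpace

open ContinuousLinearMap RCLike

variable {𝕜 E : Type*} [RCLike 𝕜] [NormedAddCommGroup E] [InnerProductSpace 𝕜 E]

theorem norm_le_inv_of_mul_sq_norm_apply_le {T : E →L[𝕜] E} {c : ℝ} (hc : 0 < c)
    (hT : ∀ v, c * ‖T v‖ ^ 2 ≤ T.reApplyInnerSelf v) : ‖T‖ ≤ c⁻¹ := by
  refine T.opNorm_le_bound (inv_nonneg.2 hc.le) fun v => ?_
  have hcauchy : c * ‖T v‖ ^ 2 ≤ ‖T v‖ * ‖v‖ := (hT v).trans (re_inner_le_norm (T v) v)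
  rw [← div_eq_inv_mul, le_div_iff₀' hc]
  rcases (norm_nonneg (T v)).eq_or_lt with hzero | hpos
  · simp [← hzero]
  · exact le_of_mul_le_mul_left (by linarith) hpos

theorem norm_one_sub_le_of_norm_le {T : E →L[𝕜] E} {c : ℝ} (hT : ‖T‖ ≤ c) : ‖1 - T‖ ≤ 1 + c :=
  (norm_sub_le 1 T).trans (add_le_add norm_id_le hT)

theorem reApplyInnerSelf_add_ofReal_smul (A B : E →L[𝕜] E) (t : ℝ) (v : E) :
    (A + (t : 𝕜) • B).reApplyInnerSelf v = A.reApplyInnerSelf v + t * B.reApplyInnerSelf v := by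
  simp [reApplyInnerSelf_apply, inner_add_left, inner_smul_left]

variable [CompleteSpace E]

theorem isUnit_of_mul_sq_norm_le_reApplyInnerSelf {T : E →L[𝕜] E} {c : ℝ} (hc : 0 < c)
    (hT : ∀ v, c * ‖v‖ ^ 2 ≤ T.reApplyInnerSelf v) : IsUnit T :=
  isUnit_of_forall_le_norm_inner_map T (c := ⟨c, hc.le⟩) hc fun v =>
    calc ‖v‖ ^ 2 * c = c * ‖v‖ ^ 2 := mul_comm _ _
      _ ≤ re (inner 𝕜 (T v) v) := hT v
      _ ≤ ‖inner 𝕜 (T v) v‖ := re_le_norm _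

theorem reApplyInnerSelf_star (T : E →L[𝕜] E) (v : E) :
    (star T).reApplyInnerSelf v = T.reApplyInnerSelf v := by
  rw [reApplyInnerSelf_apply, reApplyInnerSelf_apply, star_eq_adjoint, adjoint_inner_left,
    inner_re_symm]

theorem reApplyInnerSelf_mul_mul_self {P : E →L[𝕜] E} (hP : IsSelfAdjoint P) (T : E →L[𝕜] E)
    (v : E) : (P * T * P).reApplyInnerSelf v = T.reApplyInnerSelf (P v) :=
  congrArg re (hP.isSymmetric (T (P v)) v)

theorem norm_mul_ringInverse_mul_self_le {S Q : E →L[𝕜] E} {c : ℝ} (hc : 0 < c)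
    (hQ : IsSelfAdjoint Q) (hS : IsUnit S)
    (hSQ : ∀ v, c * ‖Q v‖ ^ 2 ≤ S.reApplyInnerSelf v) : ‖Q * Ring.inverse S * Q‖ ≤ c⁻¹ := by
  refine norm_le_inv_of_mul_sq_norm_apply_le hc fun v =>
    (hSQ (Ring.inverse S (Q v))).trans_eq ?_
  have hSv : S (Ring.inverse S (Q v)) = Q v :=
    DFunLike.congr_fun (Ring.mul_inverse_cancel S hS) (Q v)
  calc re (inner 𝕜 (S (Ring.inverse S (Q v))) (Ring.inverse S (Q v)))
      = re (inner 𝕜 v (Q (Ring.inverse S (Q v)))) := by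
        rw [hSv]
        exact congrArg re (hQ.isSymmetric v _)
    _ = re (inner 𝕜 (Q (Ring.inverse S (Q v))) v) := inner_re_symm _ _

section Compression

variable {B P M : E →L[𝕜] E}

theorem mul_mul_projection_eq_projection (hM : IsMoorePenroseInverse (P * B * P) M)
    (hP : IsStarProjection P) (hB : ∀ v ≠ 0, 0 < B.reApplyInnerSelf v) : M * B * P = P := by
  set Y := M * (P * B * P) - P with hY
  have hPY : P * Y = Y := by
    rw [hY, mul_sub, ← mul_assoc, hM.projection_mul hP, hP.isIdempotentElem.eq]
  have hCY : P * B * P * Y = 0 := by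
    rw [hY, mul_sub, ← mul_assoc, hM.mul_mul_self, mul_assoc (P * B), hP.isIdempotentElem.eq,
      sub_self]
  have hY_zero : Y = 0 := by
    ext v
    have hPYv : P (Y v) = Y v := DFunLike.congr_fun hPY v
    have hCYv : (P * B * P) (Y v) = 0 := DFunLike.congr_fun hCY v
    have hBYv : B.reApplyInnerSelf (Y v) = 0 := by
      rw [← hPYv, ← reApplyInnerSelf_mul_mul_self hP.isSelfAdjoint, reApplyInnerSelf_apply, hCYv,
        inner_zero_left, map_zero]
    by_contra hYv
    exact (hB (Y v) hYv).ne' hBYv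
  calc M * B * P = M * (P * B * P) := by simp only [← mul_assoc, hM.mul_projection hP]
    _ = P := sub_eq_zero.1 hY_zero

theorem projection_mul_mul_eq_projection (hM : IsMoorePenroseInverse (P * B * P) M)
    (hP : IsStarProjection P) (hB : ∀ v ≠ 0, 0 < B.reApplyInnerSelf v) : P * B * M = P := by
  have hP_star : star P = P := hP.isSelfAdjoint.star_eq
  have hM_star : IsMoorePenroseInverse (P * star B * P) (star M) := by
    simpa only [star_mul, hP_star, mul_assoc] using hM.star
  have hstar : star M * star B * P = P := mul_mul_projection_eq_projection hM_star hP
    fun v hv => (hB v hv).trans_eq (reApplyInnerSelf_star B v).symm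
  simpa only [star_mul, star_star, hP_star, mul_assoc] using congrArg star hstar

theorem norm_le_inv_of_projection_mul_mul_eq {β : ℝ} (hβ : 0 < β)
    (hB : ∀ v, β * ‖v‖ ^ 2 ≤ B.reApplyInnerSelf v) (hP : IsSelfAdjoint P)
    (hPM : P * M = M) (hPBM : P * B * M = P) : ‖M‖ ≤ β⁻¹ := by
  refine norm_le_inv_of_mul_sq_norm_apply_le hβ fun v => (hB (M v)).trans_eq ?_
  have hPMv : P (M v) = M v := DFunLike.congr_fun hPM v
  have hPBMv : P (B (M v)) = P v := DFunLike.congr_fun hPBM v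
  have hsymm := hP.isSymmetric
  calc re (inner 𝕜 (B (M v)) (M v)) = re (inner 𝕜 (B (M v)) (P (M v))) := by rw [hPMv]
    _ = re (inner 𝕜 (P (B (M v))) (M v)) := congrArg re (hsymm (B (M v)) (M v)).symm
    _ = re (inner 𝕜 v (P (M v))) := by
        rw [hPBMv]
        exact congrArg re (hsymm v (M v))
    _ = re (inner 𝕜 (M v) v) := by rw [hPMv, inner_re_symm]

end Compression

theorem mul_sq_norm_one_sub_le_reApplyInnerSelf {A P : E →L[𝕜] E} {α : ℝ} (hP : IsStarProjection P)
    (hAP : A * P = 0) (hPA : P * A = 0)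
    (hA : ∀ v, P v = 0 → α * ‖v‖ ^ 2 ≤ A.reApplyInnerSelf v) (v : E) :
    α * ‖(1 - P) v‖ ^ 2 ≤ A.reApplyInnerSelf v := by
  have hA_eq : (1 - P) * A * (1 - P) = A := by simp [sub_mul, mul_sub, hAP, hPA]
  calc α * ‖(1 - P) v‖ ^ 2 ≤ A.reApplyInnerSelf ((1 - P) v) :=
        hA _ (DFunLike.congr_fun hP.mul_one_sub_self v)
    _ = A.reApplyInnerSelf v := by
        rw [← reApplyInnerSelf_mul_mul_self hP.one_sub.isSelfAdjoint, hA_eq]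

theorem isUnit_add_ofReal_smul {A B : E →L[𝕜] E} {β t : ℝ} (hβ : 0 < β) (ht : 0 < t)
    (hA : ∀ v, 0 ≤ A.reApplyInnerSelf v) (hB : ∀ v, β * ‖v‖ ^ 2 ≤ B.reApplyInnerSelf v) :
    IsUnit (A + (t : 𝕜) • B) :=
  isUnit_of_mul_sq_norm_le_reApplyInnerSelf (mul_pos ht hβ) fun v => by
    rw [reApplyInnerSelf_add_ofReal_smul, mul_assoc]
    exact le_add_of_nonneg_of_le (hA v) (by gcongr; exact hB v)

theorem norm_ringInverse_add_smul_sub_inv_smul_le {A B P M : E →L[𝕜] E} {α β t : ℝ}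
    (hα : 0 < α) (hβ : 0 < β) (ht : 0 < t) (hP : IsStarProjection P)
    (hAP : A * P = 0) (hPA : P * A = 0)
    (hA : ∀ v, α * ‖(1 - P) v‖ ^ 2 ≤ A.reApplyInnerSelf v)
    (hB : ∀ v, β * ‖v‖ ^ 2 ≤ B.reApplyInnerSelf v)
    (hM : IsMoorePenroseInverse (P * B * P) M) :
    ‖Ring.inverse (A + (t : 𝕜) • B) - (t : 𝕜)⁻¹ • M‖ ≤ 1 / α * (1 + ‖B‖ / β) ^ 2 := by
  have hA_nonneg (v : E) : 0 ≤ A.reApplyInnerSelf v := le_trans (by positivity) (hA v)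
  have hB_nonneg (v : E) : 0 ≤ B.reApplyInnerSelf v := le_trans (by positivity) (hB v)
  have hB_pos (v : E) (hv : v ≠ 0) : 0 < B.reApplyInnerSelf v :=
    lt_of_lt_of_le (by positivity) (hB v)
  have hMBP : M * B * P = P := mul_mul_projection_eq_projection hM hP hB_pos
  have hPBM : P * B * M = P := projection_mul_mul_eq_projection hM hP hB_pos
  have hPM : P * M = M := hM.projection_mul hP
  have hAM : A * M = 0 := by rw [← hPM, ← mul_assoc, hAP, zero_mul]
  have hMA : M * A = 0 := by rw [← hM.mul_projection hP, mul_assoc, hPA, mul_zero]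
  have hS : IsUnit (A + (t : 𝕜) • B) := isUnit_add_ofReal_smul hβ ht hA_nonneg hB
  have hcorner : ‖(1 - P) * Ring.inverse (A + (t : 𝕜) • B) * (1 - P)‖ ≤ α⁻¹ :=
    norm_mul_ringInverse_mul_self_le hα hP.one_sub.isSelfAdjoint hS fun v => by
      rw [reApplyInnerSelf_add_ofReal_smul]
      exact le_add_of_le_of_nonneg (hA v) (mul_nonneg ht.le (hB_nonneg v))
  have hM_norm : ‖M‖ ≤ β⁻¹ :=
    norm_le_inv_of_projection_mul_mul_eq hβ hB hP.isSelfAdjoint hPM hPBM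
  have hleft : ‖1 - M * B‖ ≤ 1 + ‖B‖ / β := norm_one_sub_le_of_norm_le <| by
    grw [norm_mul_le, hM_norm, inv_mul_eq_div]
  have hright : ‖1 - B * M‖ ≤ 1 + ‖B‖ / β := norm_one_sub_le_of_norm_le <| by
    grw [norm_mul_le, hM_norm, div_eq_mul_inv]
  rw [ringInverse_add_smul_sub_inv_smul_eq_mul (ofReal_ne_zero.2 ht.ne') hS hAM hMA
    (hM.mul_mul_eq_self_of_compression hP) hMBP hPBM]
  grw [norm_mul_le, norm_mul_le, hleft, hcorner, hright]
  exact le_of_eq (by ring)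

end HilbertSpace

section Matrix

open scoped Matrix.Norms.L2Operator

variable {𝕜 n : Type*} [RCLike 𝕜] [Fintype n] [DecidableEq n] {A P : Matrix n n 𝕜}

theorem l2_opNorm_eq_norm_eigenvalues (hA : A.IsHermitian) : ‖A‖ = ‖hA.eigenvalues‖ := by
  conv_lhs => rw [hA.spectral_theorem]
  rw [Unitary.conjStarAlgAut_apply, mul_assoc, CStarRing.norm_coe_unitary_mul]
  rw [← Unitary.coe_star, CStarRing.norm_mul_coe_unitary, l2_opNorm_diagonal]
  simp [Pi.norm_def]

theorem reApplyInnerSelf_toEuclideanCLM_eq_sum (hA : A.IsHermitian) (v : EuclideanSpace 𝕜 n) :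
    (toEuclideanCLM (𝕜 := 𝕜) A).reApplyInnerSelf v =
      ∑ i, hA.eigenvalues i * ‖inner 𝕜 (hA.eigenvectorBasis i) v‖ ^ 2 := by
  set b := hA.eigenvectorBasis
  have hAb (i : n) : toEuclideanCLM (𝕜 := 𝕜) A (b i) = (hA.eigenvalues i : 𝕜) • b i :=
    WithLp.ofLp_injective 2 (by simpa using! hA.mulVec_eigenvectorBasis i)
  have hsymm (i : n) : inner 𝕜 (toEuclideanCLM (𝕜 := 𝕜) A v) (b i) =
      inner 𝕜 v (toEuclideanCLM (𝕜 := 𝕜) A (b i)) :=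
    (hA.isSelfAdjoint.map (toEuclideanCLM (𝕜 := 𝕜))).isSymmetric v (b i)
  rw [ContinuousLinearMap.reApplyInnerSelf_apply, ← b.sum_inner_mul_inner, map_sum]
  refine Finset.sum_congr rfl fun i _ => ?_
  rw [hsymm, hAb, inner_smul_right, mul_assoc, RCLike.re_ofReal_mul, inner_mul_symm_re_eq_norm,
    norm_mul, norm_inner_symm, ← sq]

theorem mul_sq_norm_le_reApplyInnerSelf_toEuclideanCLM (hA : A.IsHermitian) {c : ℝ}
    {v : EuclideanSpace 𝕜 n}
    (hv : ∀ i, inner 𝕜 (hA.eigenvectorBasis i) v ≠ 0 → c ≤ hA.eigenvalues i) :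
    c * ‖v‖ ^ 2 ≤ (toEuclideanCLM (𝕜 := 𝕜) A).reApplyInnerSelf v := by
  rw [reApplyInnerSelf_toEuclideanCLM_eq_sum hA, ← hA.eigenvectorBasis.sum_sq_norm_inner_right v,
    Finset.mul_sum]
  refine Finset.sum_le_sum fun i _ => ?_
  by_cases hi : inner 𝕜 (hA.eigenvectorBasis i) v = 0
  · simp [hi]
  · gcongr
    exact hv i hi

theorem inner_eigenvectorBasis_eq_zero_of_eigenvalue_eq_zero (hA : A.IsHermitian)
    (hP : P.IsHermitian) (hker : ∀ v : n → 𝕜, A *ᵥ v = 0 → P *ᵥ v = v)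
    {v : EuclideanSpace 𝕜 n} (hv : toEuclideanCLM (𝕜 := 𝕜) P v = 0) {i : n}
    (hi : hA.eigenvalues i = 0) : inner 𝕜 (hA.eigenvectorBasis i) v = 0 := by
  have hPb : toEuclideanCLM (𝕜 := 𝕜) P (hA.eigenvectorBasis i) = hA.eigenvectorBasis i :=
    WithLp.ofLp_injective 2 <|
      hker (hA.eigenvectorBasis i) (by rw [hA.mulVec_eigenvectorBasis, hi, zero_smul])
  rw [← hPb]
  exact ((hP.isSelfAdjoint.map (toEuclideanCLM (𝕜 := 𝕜))).isSymmetric _ v).trans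
    (by simp [hv])

theorem mul_sq_norm_one_sub_le_reApplyInnerSelf_toEuclideanCLM (hA : A.IsHermitian) {α : ℝ}
    (hα : ∀ i, hA.eigenvalues i ≠ 0 → α ≤ hA.eigenvalues i) (hP : IsStarProjection P)
    (hAP : A * P = 0) (hPA : P * A = 0) (hker : ∀ v : n → 𝕜, A *ᵥ v = 0 → P *ᵥ v = v)
    (v : EuclideanSpace 𝕜 n) :
    α * ‖(1 - toEuclideanCLM (𝕜 := 𝕜) P) v‖ ^ 2 ≤
      (toEuclideanCLM (𝕜 := 𝕜) A).reApplyInnerSelf v :=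
  mul_sq_norm_one_sub_le_reApplyInnerSelf (hP.map (toEuclideanCLM (𝕜 := 𝕜)))
    (by rw [← map_mul, hAP, map_zero]) (by rw [← map_mul, hPA, map_zero])
    (fun _ hv => mul_sq_norm_le_reApplyInnerSelf_toEuclideanCLM hA fun i hi =>
      hα i (mt (inner_eigenvectorBasis_eq_zero_of_eigenvalue_eq_zero hA hP.isSelfAdjoint hker hv)
        hi)) v

theorem inverse_expansion_psd_perturbation_general [Nonempty n] {B M : Matrix n n 𝕜}
    {α β Λ t : ℝ} (hα : 0 < α) (hβ : 0 < β) (ht : 0 < t)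
    (hA : A.IsHermitian) (hα_min : ∀ i, hA.eigenvalues i ≠ 0 → α ≤ hA.eigenvalues i)
    (hB : B.IsHermitian) (hβ_min : ∀ i, β ≤ hB.eigenvalues i)
    (hΛ_max : ∀ i, hB.eigenvalues i ≤ Λ) (hP : IsStarProjection P) (hAP : A * P = 0)
    (hker : ∀ v : n → 𝕜, A *ᵥ v = 0 → P *ᵥ v = v) (hM : IsMoorePenroseInverse (P * B * P) M) :
    IsUnit (A + (t : 𝕜) • B) ∧
      ‖(A + (t : 𝕜) • B)⁻¹ - (t : 𝕜)⁻¹ • M‖ ≤ 1 / α * (1 + Λ / β) ^ 2 := by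
  let Φ := toEuclideanCLM (n := n) (𝕜 := 𝕜)
  have hPA : P * A = 0 := by
    rw [← hP.isSelfAdjoint.star_eq, ← hA.isSelfAdjoint.star_eq, ← star_mul, hAP, star_zero]
  have hA_gap := mul_sq_norm_one_sub_le_reApplyInnerSelf_toEuclideanCLM hA hα_min hP hAP hPA hker
  have hB_coercive (v) : β * ‖v‖ ^ 2 ≤ (Φ B).reApplyInnerSelf v :=
    mul_sq_norm_le_reApplyInnerSelf_toEuclideanCLM hB fun i _ => hβ_min i
  have hB_norm : ‖B‖ ≤ Λ := l2_opNorm_eq_norm_eigenvalues hB ▸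
    pi_norm_le_iff_of_nonempty _ |>.2 fun i => by
      rw [Real.norm_of_nonneg (hβ.le.trans (hβ_min i))]
      exact hΛ_max i
  have hΦ : Φ (A + (t : 𝕜) • B) = Φ A + (t : 𝕜) • Φ B := by rw [map_add, map_smul]
  have hS : IsUnit (A + (t : 𝕜) • B) := (isUnit_map_iff Φ _).1 <| hΦ ▸
    isUnit_add_ofReal_smul hβ ht (fun v => le_trans (by positivity) (hA_gap v)) hB_coercive
  refine ⟨hS, ?_⟩
  calc ‖(A + (t : 𝕜) • B)⁻¹ - (t : 𝕜)⁻¹ • M‖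
      = ‖Ring.inverse (Φ A + (t : 𝕜) • Φ B) - (t : 𝕜)⁻¹ • Φ M‖ := by
        rw [← l2_opNorm_toEuclideanCLM, map_sub, map_smul, nonsing_inv_eq_ringInverse,
          map_ringInverse_of_isUnit Φ hS, hΦ]
    _ ≤ 1 / α * (1 + ‖B‖ / β) ^ 2 :=
        norm_ringInverse_add_smul_sub_inv_smul_le hα hβ ht (hP.map Φ)
          (by rw [← map_mul, hAP, map_zero]) (by rw [← map_mul, hPA, map_zero]) hA_gap hB_coercive
          (by simpa only [map_mul] using hM.map Φ)
    _ ≤ 1 / α * (1 + Λ / β) ^ 2 := by gcongr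

end Matrix

/-- Expansion of `(A + tB)⁻¹` for `A ⪰ 0`, `B ≻ 0`: for every `t > 0` the
matrix `A + tB` is invertible and
`‖(A + tB)⁻¹ - (1/t) (P B P)†‖₂ ≤ (1/λ⁺min(A)) (1 + λmax(B)/λmin(B))²`,
where `P` is the orthogonal projection onto `ker A`, `(P B P)†` is the
Moore–Penrose pseudoinverse (characterized by the Penrose conditions),
`λ⁺min(A)` is the smallest nonzero eigenvalue of `A ≠ 0`, and
`λmin(B), λmax(B)` are the extreme eigenvalues of `B`. -/
theorem inverse_expansion_psd_perturbation (n : ℕ)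
    (A B : Matrix (Fin n) (Fin n) ℝ)
    (hA : A.PosSemidef) (hB : B.PosDef) (hA0 : A ≠ 0)
    (P : Matrix (Fin n) (Fin n) ℝ)
    (hP_idem : P * P = P) (hP_sym : P.IsSymm)
    (hP_ker : ∀ v : Fin n → ℝ, A.mulVec (P.mulVec v) = 0)
    (hP_ker' : ∀ v : Fin n → ℝ, A.mulVec v = 0 → P.mulVec v = v)
    (M : Matrix (Fin n) (Fin n) ℝ)
    (hM1 : P * B * P * M * (P * B * P) = P * B * P)
    (hM2 : M * (P * B * P) * M = M)
    (hM3 : (P * B * P * M).IsSymm)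
    (hM4 : (M * (P * B * P)).IsSymm)
    (α β Λ : ℝ)
    (hα_pos : 0 < α)
    (hα_eig : ∃ i, hA.1.eigenvalues i = α)
    (hα_min : ∀ i, hA.1.eigenvalues i ≠ 0 → α ≤ hA.1.eigenvalues i)
    (hβ_eig : ∃ i, hB.1.eigenvalues i = β)
    (hβ_min : ∀ i, β ≤ hB.1.eigenvalues i)
    (hΛ_eig : ∃ i, hB.1.eigenvalues i = Λ)
    (hΛ_max : ∀ i, hB.1.eigenvalues i ≤ Λ) :
    ∃ t₀ : ℝ, 0 < t₀ ∧ ∀ t : ℝ, 0 < t → t < t₀ →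
      IsUnit (A + t • B) ∧
      specNorm5 ((A + t • B)⁻¹ - t⁻¹ • M) ≤ (1 / α) * (1 + Λ / β) ^ 2 := by
  have hP : IsStarProjection P := ⟨hP_idem, isHermitian_iff_isSymm.2 hP_sym⟩
  have hAP : A * P = 0 := ext_of_mulVec_single fun i => by
    rw [← mulVec_mulVec, hP_ker, zero_mulVec]
  have hM : IsMoorePenroseInverse (P * B * P) M :=
    ⟨hM1, hM2, isHermitian_iff_isSymm.2 hM3, isHermitian_iff_isSymm.2 hM4⟩
  obtain ⟨i, hi⟩ := hβ_eig
  have : Nonempty (Fin n) := ⟨i⟩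
  exact ⟨1, one_pos, fun t ht _ => inverse_expansion_psd_perturbation_general hα_pos
    (hi ▸ hB.eigenvalues_pos i) ht hA.1 hα_min hB.1 hβ_min hΛ_max hP hAP hP_ker' hM⟩
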